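/- Let E ∈ 𝓔, let M be a closed subspace of E having the division property, let π : E → E/M be the canonical surjection, let U := U₀ : E/M → E/M be the linear map satisfying U ∘ π ∘ S|_E = π, and let f ∈ M. Then for every λ ∈ 𝔻: the operator I_{E/M} − λU is bijective and f(λ)·U(I_{E/M} − λU)^{-1}π(1) = −π(f_λ). -/

import Mathlib

noncomputable section

open Metric Set Filter Topology
open scoped Classical

/-- Functions holomorphic on the open unit disc, normalized to vanish outside it.
This is our model of `Hol(𝔻)`. -/
def HolDisc : Set (ℂ → ℂ) :=
  {f | DifferentiableOn ℂ f (Metric.ball (0:ℂ) 1) ∧ ∀ z ∉ Metric.ball (0:ℂ) 1, f z = 0}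

/-- The constant function `1` of `Hol(𝔻)` (normalized to vanish outside the disc). -/
def oneD : ℂ → ℂ := fun z => if z ∈ Metric.ball (0:ℂ) 1 then 1 else 0

/-- The shift `S`, `(Sf)(z) = z f(z)`, as a linear map. -/
def shiftL : (ℂ → ℂ) →ₗ[ℂ] (ℂ → ℂ) where
  toFun f := fun z => z * f z
  map_add' f g := by funext z; simp [mul_add]
  map_smul' c f := by funext z; simp [smul_eq_mul]; ring

/-- Division: `f_λ(z) = (f(z) - f(λ))/(z - λ)` for `z ≠ λ`, `f_λ(λ) = f'(λ)`,
normalized to vanish outside the disc.  `fdivB 0` is the backward shift `T`. -/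
def fdivB (lam : ℂ) (f : ℂ → ℂ) : ℂ → ℂ := fun z =>
  if z ∈ Metric.ball (0:ℂ) 1 then
    (if z = lam then deriv f lam else (f z - f lam) / (z - lam))
  else 0

/-- The reflected model of the shift `S⁻` on `H₀(ℂ ∖ 𝔻̄)`: a function `h` on `{|ζ|>1}`
vanishing at `∞` is represented by `k(w) = h(1/w)` (holomorphic on `𝔻`, `k 0 = 0`);
`S⁻` corresponds to `k ↦ (k(z) - k(0))/z - k'(0)·1`. -/
def negShiftF (k : ℂ → ℂ) : ℂ → ℂ := fun z => fdivB 0 k z - deriv k 0 * oneD z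

/-- `n`-th Taylor coefficient at the origin. -/
def tCoeff (n : ℕ) (f : ℂ → ℂ) : ℂ := iteratedDeriv n f 0 / (Nat.factorial n)

/-!
Write `π` for the quotient map and `S` for multiplication by `z`. Since `U (π (S k)) = π k`, the
operator `I - λU` sends `π (S k)` to `π ((S - λ) k)`, so everything reduces to division by
`z - λ`. Dividing inside `E`, by means of `T (I - λT)⁻¹`, shows that the range of `S - λ` consists
of the functions vanishing at `λ`. Some `p ∈ M` does not vanish at `λ`: otherwise repeated
division inside `M` would force every element of `M` to vanish to infinite order at `λ`.
Subtracting a multiple of `p` makes any class in `E/M` the class of some `(S - λ) k`, while the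
division property of `M` says that `(S - λ) k ∈ M` only if `k ∈ M`; this gives bijectivity.
Finally `(S - λ) f_λ = f - f(λ)` and `π f = 0`, so `(I - λU) (π (S f_λ)) = -f(λ) π(1)`, and one
applies `U (I - λU)⁻¹`.
-/

section Quotient

variable {R X : Type*} [CommRing R] [AddCommGroup X] [Module R X] {M : Submodule R X}
  {S : X →ₗ[R] X} {U : (X ⧸ M) →ₗ[R] (X ⧸ M)}

lemma id_sub_smul_mkQ_map (hU : ∀ x, U (M.mkQ (S x)) = M.mkQ x) (c : R) (x : X) :
    ((LinearMap.id : (X ⧸ M) →ₗ[R] (X ⧸ M)) - c • U) (M.mkQ (S x)) = M.mkQ (S x - c • x) := by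
  rw [LinearMap.sub_apply, LinearMap.smul_apply, hU, map_sub, map_smul, LinearMap.id_apply]

lemma bijective_id_sub_smul_of_surjective (hU : ∀ x, U (M.mkQ (S x)) = M.mkQ x) {c : R}
    (hS : ∀ q, ∃ x, M.mkQ (S x) = q) (hSc : ∀ q, ∃ x, M.mkQ (S x - c • x) = q)
    (hM : ∀ x, S x - c • x ∈ M → x ∈ M) :
    Function.Bijective ⇑((LinearMap.id : (X ⧸ M) →ₗ[R] (X ⧸ M)) - c • U) := by
  refine ⟨(injective_iff_map_eq_zero _).2 fun q hq ↦ ?_, fun q ↦ ?_⟩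
  · obtain ⟨x, rfl⟩ := hS q
    rw [id_sub_smul_mkQ_map hU, Submodule.mkQ_apply, Submodule.Quotient.mk_eq_zero] at hq
    have hSx : S x ∈ M := (M.sub_mem_iff_left (M.smul_mem c (hM x hq))).1 hq
    rwa [Submodule.mkQ_apply, Submodule.Quotient.mk_eq_zero]
  · obtain ⟨x, rfl⟩ := hSc q
    exact ⟨M.mkQ (S x), id_sub_smul_mkQ_map hU c x⟩

lemma smul_map_leftInverse_mkQ_eq_neg (hU : ∀ x, U (M.mkQ (S x)) = M.mkQ x) {a c : R}
    {e f g : X} (hf : f ∈ M) (hg : S g - c • g = f - a • e) {V : (X ⧸ M) →ₗ[R] (X ⧸ M)}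
    (hV : Function.LeftInverse V ⇑((LinearMap.id : (X ⧸ M) →ₗ[R] (X ⧸ M)) - c • U)) :
    a • U (V (M.mkQ e)) = -M.mkQ g := by
  have hπf : M.mkQ f = 0 := by rwa [Submodule.mkQ_apply, Submodule.Quotient.mk_eq_zero]
  have hSg : ((LinearMap.id : (X ⧸ M) →ₗ[R] (X ⧸ M)) - c • U) (M.mkQ (S g)) = -(a • M.mkQ e) := by
    rw [id_sub_smul_mkQ_map hU, hg, map_sub, hπf, zero_sub, map_smul]
  calc a • U (V (M.mkQ e)) = -U (V (-(a • M.mkQ e))) := by simp only [map_neg, map_smul, neg_neg]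
    _ = -U (M.mkQ (S g)) := by rw [← hSg, hV]
    _ = -M.mkQ g := by rw [hU]

end Quotient

section DiscFunctions

variable {f k : ℂ → ℂ} {l z : ℂ}

lemma shiftL_sub_smul_apply (k : ℂ → ℂ) (l z : ℂ) :
    (shiftL k - l • k) z = (z - l) * k z := by
  simp only [shiftL, LinearMap.coe_mk, AddHom.coe_mk, Pi.sub_apply, Pi.smul_apply, smul_eq_mul,
    sub_mul]

lemma oneD_of_mem (hz : z ∈ ball (0 : ℂ) 1) : oneD z = 1 :=
  if_pos hz

lemma oneD_of_notMem (hz : z ∉ ball (0 : ℂ) 1) : oneD z = 0 :=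
  if_neg hz

lemma fdivB_self (hl : l ∈ ball (0 : ℂ) 1) : fdivB l f l = deriv f l := by
  rw [fdivB, if_pos hl, if_pos rfl]

lemma fdivB_of_ne (hz : z ∈ ball (0 : ℂ) 1) (hzl : z ≠ l) :
    fdivB l f z = (f z - f l) / (z - l) := by
  rw [fdivB, if_pos hz, if_neg hzl]

lemma fdivB_of_notMem (hz : z ∉ ball (0 : ℂ) 1) : fdivB l f z = 0 :=
  if_neg hz

lemma shiftL_fdivB_sub_smul (hf : ∀ z ∉ ball (0 : ℂ) 1, f z = 0) (l : ℂ) :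
    shiftL (fdivB l f) - l • fdivB l f = f - f l • oneD := by
  funext z
  rw [shiftL_sub_smul_apply, Pi.sub_apply, Pi.smul_apply, smul_eq_mul]
  by_cases hz : z ∈ ball (0 : ℂ) 1
  · rcases eq_or_ne z l with rfl | hzl
    · rw [oneD_of_mem hz, sub_self, zero_mul, mul_one, sub_self]
    · rw [fdivB_of_ne hz hzl, oneD_of_mem hz, mul_div_cancel₀ _ (sub_ne_zero.2 hzl), mul_one]
  · rw [fdivB_of_notMem hz, oneD_of_notMem hz, hf z hz, mul_zero, mul_zero, sub_zero]

lemma eq_fdivB_of_shiftL_sub_smul_eq (hk : k ∈ HolDisc)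
    (h : shiftL k - l • k = f - f l • oneD) : k = fdivB l f := by
  have hfk : ∀ z ∈ ball (0 : ℂ) 1, f z = (z - l) * k z + f l := fun z hz ↦ by
    have hat := congrFun h z
    rw [shiftL_sub_smul_apply, Pi.sub_apply, Pi.smul_apply, smul_eq_mul, oneD_of_mem hz] at hat
    rw [hat, mul_one, sub_add_cancel]
  funext z
  by_cases hz : z ∈ ball (0 : ℂ) 1
  · rcases eq_or_ne z l with rfl | hzl
    · have hkz : HasDerivAt k (deriv k z) z :=
        (hk.1.differentiableAt (isOpen_ball.mem_nhds hz)).hasDerivAt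
      have hfz : HasDerivAt f (1 * k z + (z - z) * deriv k z) z :=
        ((((hasDerivAt_id z).sub_const z).mul hkz).add_const (f z)).congr_of_eventuallyEq
          (eventuallyEq_of_mem (isOpen_ball.mem_nhds hz) hfk)
      rw [fdivB_self hz, hfz.deriv, one_mul, sub_self, zero_mul, add_zero]
    · rw [fdivB_of_ne hz hzl, hfk z hz, add_sub_cancel_right,
        mul_div_cancel_left₀ _ (sub_ne_zero.2 hzl)]
  · rw [fdivB_of_notMem hz, hk.2 z hz]

lemma eq_fdivB_iff (hf : ∀ z ∉ ball (0 : ℂ) 1, f z = 0) (hk : k ∈ HolDisc) :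
    k = fdivB l f ↔ shiftL k - l • k = f - f l • oneD :=
  ⟨fun h ↦ h ▸ shiftL_fdivB_sub_smul hf l, eq_fdivB_of_shiftL_sub_smul_eq hk⟩

lemma analyticAt_of_mem_holDisc (hk : k ∈ HolDisc) (hl : l ∈ ball (0 : ℂ) 1) :
    AnalyticAt ℂ k l :=
  hk.1.analyticAt (isOpen_ball.mem_nhds hl)

lemma analyticOrderAt_shiftL_sub_smul (hk : AnalyticAt ℂ k l) :
    analyticOrderAt (shiftL k - l • k) l = analyticOrderAt k l + 1 := by
  have hfactor : shiftL k - l • k = (fun z ↦ z - l) * k := funext (shiftL_sub_smul_apply k l)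
  have hsub : AnalyticAt ℂ (fun z : ℂ ↦ z - l) l := by fun_prop
  rw [hfactor, analyticOrderAt_mul hsub hk, analyticOrderAt_id_sub_const_self, add_comm]

lemma eq_zero_of_analyticOrderAt_eq_top (hf : f ∈ HolDisc) (hl : l ∈ ball (0 : ℂ) 1)
    (h : analyticOrderAt f l = ⊤) : f = 0 := by
  have hzero : EqOn f 0 (ball 0 1) :=
    (hf.1.analyticOnNhd isOpen_ball).eqOn_zero_of_preconnected_of_eventuallyEq_zero
      (convex_ball (0 : ℂ) 1).isPreconnected hl (analyticOrderAt_eq_top.1 h)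
  funext z
  by_cases hz : z ∈ ball (0 : ℂ) 1
  exacts [hzero hz, hf.2 z hz]

end DiscFunctions

/-- The division property of a space `M` of functions on the disc: dividing out a zero stays in `M`.
Elements of the ambient space `X` are read as functions through `ι`. -/
def HasDivisionProperty {X : Type*} [AddCommGroup X] [Module ℂ X] (ι : X →ₗ[ℂ] (ℂ → ℂ))
    (M : Submodule ℂ X) : Prop :=
  ∀ f ∈ M, ∀ l ∈ ball (0 : ℂ) 1, ι f l = 0 → ∃ g ∈ M, ι g = fdivB l (ι f)

lemma hasDivisionProperty_top_of_spectralRadius_le_one {X : Type*} [NormedAddCommGroup X]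
    [NormedSpace ℂ X] {ι : X →ₗ[ℂ] (ℂ → ℂ)} (hhol : ∀ f, ι f ∈ HolDisc) {T : X →L[ℂ] X}
    (hT : ∀ f, ι (T f) = fdivB 0 (ι f)) (hrad : spectralRadius ℂ T ≤ 1) :
    HasDivisionProperty ι ⊤ := by
  intro h _ l hl hhl
  have hunit : IsUnit (1 - l • T) := by
    refine spectrum.isUnit_one_sub_smul_of_lt_inv_radius
      (lt_of_lt_of_le ?_ (ENNReal.one_le_inv.2 hrad))
    exact_mod_cast mem_ball_zero_iff.1 hl
  obtain ⟨W, hW⟩ := hunit.exists_right_inv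
  set u := W h
  have hu : u - l • T u = h := by simpa using congrArg (fun A : X →L[ℂ] X ↦ A h) hW
  have hιu : ι u - l • ι (T u) = ι h := by rw [← hu, map_sub, map_smul]
  have hshift : shiftL (ι (T u)) = ι u - ι u 0 • oneD := by
    simpa using (eq_fdivB_iff (hhol u).2 (hhol (T u))).1 (hT u)
  have hdivision : shiftL (ι (T u)) - l • ι (T u) = ι h - ι u 0 • oneD := by
    rw [hshift, ← hιu, sub_right_comm]
  have hu0 : ι u 0 = 0 := by
    have hat := congrFun hdivision l
    rw [shiftL_sub_smul_apply] at hat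
    simpa [oneD_of_mem hl, hhl] using hat
  exact ⟨T u, Submodule.mem_top,
    (eq_fdivB_iff (hhol h).2 (hhol (T u))).2 (by rw [hdivision, hu0, hhl])⟩

section FunctionSpace

variable {X : Type*} [AddCommGroup X] [Module ℂ X] {ι : X →ₗ[ℂ] (ℂ → ℂ)} {S : X →ₗ[ℂ] X}
  {M : Submodule ℂ X} {l : ℂ}

lemma map_shift_sub_smul (hS : ∀ f, ι (S f) = shiftL (ι f)) (k : X) (l : ℂ) :
    ι (S k - l • k) = shiftL (ι k) - l • ι k := by
  rw [map_sub, map_smul, hS]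

lemma map_shift_sub_smul_apply_self (hS : ∀ f, ι (S f) = shiftL (ι f)) (k : X) (l : ℂ) :
    ι (S k - l • k) l = 0 := by
  rw [map_shift_sub_smul hS, shiftL_sub_smul_apply, sub_self, zero_mul]

lemma map_eq_fdivB_iff (hinj : Function.Injective ι) (hhol : ∀ f, ι f ∈ HolDisc)
    (hS : ∀ f, ι (S f) = shiftL (ι f)) {e : X} (he : ι e = oneD) {f g : X} :
    ι g = fdivB l (ι f) ↔ S g - l • g = f - ι f l • e := by
  rw [eq_fdivB_iff (hhol f).2 (hhol g), ← map_shift_sub_smul hS, ← he, ← map_smul, ← map_sub,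
    hinj.eq_iff]

lemma map_eq_fdivB_iff_of_apply_eq_zero (hinj : Function.Injective ι)
    (hhol : ∀ f, ι f ∈ HolDisc) (hS : ∀ f, ι (S f) = shiftL (ι f)) {f g : X}
    (hfl : ι f l = 0) : ι g = fdivB l (ι f) ↔ S g - l • g = f := by
  rw [eq_fdivB_iff (hhol f).2 (hhol g), ← map_shift_sub_smul hS, hfl, zero_smul, sub_zero,
    hinj.eq_iff]

namespace HasDivisionProperty

lemma exists_shift_sub_smul_eq (hM : HasDivisionProperty ι M) (hinj : Function.Injective ι)
    (hhol : ∀ f, ι f ∈ HolDisc) (hS : ∀ f, ι (S f) = shiftL (ι f)) (hl : l ∈ ball (0 : ℂ) 1)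
    {f : X} (hf : f ∈ M) (hfl : ι f l = 0) : ∃ g ∈ M, S g - l • g = f := by
  obtain ⟨g, hgM, hg⟩ := hM f hf l hl hfl
  exact ⟨g, hgM, (map_eq_fdivB_iff_of_apply_eq_zero hinj hhol hS hfl).1 hg⟩

lemma mem_of_shift_sub_smul_mem (hM : HasDivisionProperty ι M) (hinj : Function.Injective ι)
    (hhol : ∀ f, ι f ∈ HolDisc) (hS : ∀ f, ι (S f) = shiftL (ι f)) (hl : l ∈ ball (0 : ℂ) 1)
    {k : X} (hk : S k - l • k ∈ M) : k ∈ M := by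
  have hzero := map_shift_sub_smul_apply_self hS k l
  obtain ⟨g, hgM, hg⟩ := hM _ hk l hl hzero
  have hkdiv := (map_eq_fdivB_iff_of_apply_eq_zero hinj hhol hS hzero).2 rfl
  exact hinj (hkdiv.trans hg.symm) ▸ hgM

lemma natCast_le_analyticOrderAt (hM : HasDivisionProperty ι M) (hhol : ∀ f, ι f ∈ HolDisc)
    (hl : l ∈ ball (0 : ℂ) 1) (hvanish : ∀ f ∈ M, ι f l = 0) (n : ℕ) :
    ∀ f ∈ M, n ≤ analyticOrderAt (ι f) l := by
  induction n with
  | zero => simp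
  | succ n ih =>
    intro f hf
    obtain ⟨g, hgM, hg⟩ := hM f hf l hl (hvanish f hf)
    have hfactor : shiftL (ι g) - l • ι g = ι f := by
      simpa [hvanish f hf] using (eq_fdivB_iff (hhol f).2 (hhol g)).1 hg
    rw [← hfactor, analyticOrderAt_shiftL_sub_smul (analyticAt_of_mem_holDisc (hhol g) hl),
      Nat.cast_succ]
    gcongr
    exact ih g hgM

lemma exists_apply_ne_zero (hM : HasDivisionProperty ι M) (hinj : Function.Injective ι)
    (hhol : ∀ f, ι f ∈ HolDisc) (hM0 : M ≠ ⊥) (hl : l ∈ ball (0 : ℂ) 1) :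
    ∃ p ∈ M, ι p l ≠ 0 := by
  by_contra! hvanish
  obtain ⟨f, hf, hf0⟩ := M.exists_mem_ne_zero_of_ne_bot hM0
  have htop : analyticOrderAt (ι f) l = ⊤ :=
    ENat.eq_top_iff_forall_ge.2 fun n ↦ hM.natCast_le_analyticOrderAt hhol hl hvanish n f hf
  exact hf0 <| (map_eq_zero_iff ι hinj).1 <| eq_zero_of_analyticOrderAt_eq_top (hhol f) hl htop

lemma exists_mkQ_shift_sub_smul_eq (hM : HasDivisionProperty ι M)
    (hX : HasDivisionProperty ι ⊤) (hinj : Function.Injective ι) (hhol : ∀ f, ι f ∈ HolDisc)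
    (hS : ∀ f, ι (S f) = shiftL (ι f)) (hM0 : M ≠ ⊥) (hl : l ∈ ball (0 : ℂ) 1) (q : X ⧸ M) :
    ∃ k, M.mkQ (S k - l • k) = q := by
  obtain ⟨h, rfl⟩ := M.mkQ_surjective q
  obtain ⟨p, hpM, hpl⟩ := hM.exists_apply_ne_zero hinj hhol hM0 hl
  have hzero : ι (h - (ι h l / ι p l) • p) l = 0 := by simp [div_mul_cancel₀ _ hpl]
  obtain ⟨k, -, hk⟩ := hX.exists_shift_sub_smul_eq hinj hhol hS hl Submodule.mem_top hzero
  have hπp : M.mkQ p = 0 := by rwa [Submodule.mkQ_apply, Submodule.Quotient.mk_eq_zero]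
  exact ⟨k, by rw [hk, map_sub, map_smul, hπp, smul_zero, sub_zero]⟩

lemma bijective_id_sub_smul (hM : HasDivisionProperty ι M) (hX : HasDivisionProperty ι ⊤)
    (hinj : Function.Injective ι) (hhol : ∀ f, ι f ∈ HolDisc)
    (hS : ∀ f, ι (S f) = shiftL (ι f)) (hM0 : M ≠ ⊥) {U : (X ⧸ M) →ₗ[ℂ] (X ⧸ M)}
    (hU : ∀ f, U (M.mkQ (S f)) = M.mkQ f) (hl : l ∈ ball (0 : ℂ) 1) :
    Function.Bijective ⇑((LinearMap.id : (X ⧸ M) →ₗ[ℂ] (X ⧸ M)) - l • U) := by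
  have hsurj {c : ℂ} (hc : c ∈ ball (0 : ℂ) 1) (q : X ⧸ M) : ∃ k, M.mkQ (S k - c • k) = q :=
    hM.exists_mkQ_shift_sub_smul_eq hX hinj hhol hS hM0 hc q
  refine bijective_id_sub_smul_of_surjective hU (fun q ↦ ?_) (hsurj hl)
    fun k ↦ hM.mem_of_shift_sub_smul_mem hinj hhol hS hl
  simpa only [zero_smul, sub_zero] using hsurj (mem_ball_self one_pos) q

end HasDivisionProperty

end FunctionSpace

theorem statement15_general {X : Type*} [AddCommGroup X] [Module ℂ X]
    (ι : X →ₗ[ℂ] (ℂ → ℂ)) (hinj : Function.Injective ι) (hhol : ∀ f, ι f ∈ HolDisc)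
    (S : X →ₗ[ℂ] X) (hS : ∀ f, ι (S f) = shiftL (ι f)) (hX : HasDivisionProperty ι ⊤)
    (e : X) (he : ι e = oneD)
    (M : Submodule ℂ X) (hM0 : M ≠ ⊥) (hM : HasDivisionProperty ι M)
    (U : (X ⧸ M) →ₗ[ℂ] (X ⧸ M)) (hU : ∀ f, U (M.mkQ (S f)) = M.mkQ f)
    (f : X) (hf : f ∈ M) (lam : ℂ) (hlam : lam ∈ ball (0 : ℂ) 1) :
    Function.Bijective ⇑((LinearMap.id : (X ⧸ M) →ₗ[ℂ] (X ⧸ M)) - lam • U) ∧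
      ∀ V : (X ⧸ M) →ₗ[ℂ] (X ⧸ M),
        Function.LeftInverse V ⇑((LinearMap.id : (X ⧸ M) →ₗ[ℂ] (X ⧸ M)) - lam • U) →
        ∀ g, ι g = fdivB lam (ι f) → ι f lam • U (V (M.mkQ e)) = -M.mkQ g :=
  ⟨hM.bijective_id_sub_smul hX hinj hhol hS hM0 hU hlam, fun _ hV _ hg ↦
    smul_map_leftInverse_mkQ_eq_neg hU hf ((map_eq_fdivB_iff hinj hhol hS he).1 hg) hV⟩

/-- (Lemma 7.2) Let `M` be a (nonzero) closed subspace of `E ∈ 𝓔`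
having the division property, `π : E → E/M`, and `U = U₀` the linear map satisfying
`U ∘ π ∘ S = π`. Then for `f ∈ M` and `λ ∈ 𝔻`, `I - λU` is bijective and
`f(λ)·U (I - λU)⁻¹ π(1) = -π(f_λ)`. -/
theorem statement15
    {X : Type*} [NormedAddCommGroup X] [NormedSpace ℂ X] [CompleteSpace X]
    (ι : X →ₗ[ℂ] (ℂ → ℂ)) (hinj : Function.Injective ι)
    (hhol : ∀ f : X, ι f ∈ HolDisc)
    (Sb Tb : X →L[ℂ] X)
    (hSb : ∀ f : X, ι (Sb f) = shiftL (ι f))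
    (hTb : ∀ f : X, ι (Tb f) = fdivB 0 (ι f))
    (hSrad : spectralRadius ℂ Sb ≤ 1) (hTrad : spectralRadius ℂ Tb ≤ 1)
    -- the constant function 1, as an element of E
    (e : X) (he : ι e = oneD)
    -- M : nonzero closed subspace with the division property
    (M : Submodule ℂ X) (hMc : IsClosed (M : Set X)) (hM0 : M ≠ ⊥)
    (hdiv : ∀ f ∈ M, ∀ lam ∈ Metric.ball (0:ℂ) 1,
      ι f lam = 0 → ∃ g ∈ M, ι g = fdivB lam (ι f))
    -- U = U₀ : E/M → E/M with U ∘ π ∘ S|E = π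
    (U : (X ⧸ M) →ₗ[ℂ] (X ⧸ M)) (hU : ∀ f : X, U (M.mkQ (Sb f)) = M.mkQ f)
    (f : X) (hf : f ∈ M) (lam : ℂ) (hlam : lam ∈ Metric.ball (0:ℂ) 1) :
    Function.Bijective
      ⇑((LinearMap.id : (X ⧸ M) →ₗ[ℂ] (X ⧸ M)) - lam • U)
    ∧ ∀ V : (X ⧸ M) →ₗ[ℂ] (X ⧸ M),
        (∀ q, V (((LinearMap.id : (X ⧸ M) →ₗ[ℂ] (X ⧸ M)) - lam • U) q) = q) →
        ∀ g : X, ι g = fdivB lam (ι f) →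
          (ι f lam) • U (V (M.mkQ e)) = - M.mkQ g :=
  statement15_general ι hinj hhol Sb hSb
    (hasDivisionProperty_top_of_spectralRadius_le_one hhol hTb hTrad) e he M hM0 hdiv U hU
    f hf lam hlam
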